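/- arXiv:2501.19193 — 2 statements merged into one kernel-verified Lean document; each statement's English description precedes it below -/
import Mathlib

section
/- For every positive integer n, the convex hull of H_n ∩ ℤ² has at least 2·n^{1/3} − 2 vertices. -/
/-!
The vertices are exhibited explicitly. For an integer `a ≥ 1` with `(a - 1) a (a + 1) ≤ n`, let
`b = ⌈n / a⌉`. The second difference of `x ↦ n / x` at `a` is `2 n / ((a - 1) a (a + 1)) ≥ 2`, which
is more than rounding up can destroy: with slope `s = n / (a (a + 1)) + 1` the linear functional
`s x + y` has a strict minimum over the lattice points of `H_n` at `(a, b)`, so `(a, b)` is a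
vertex. By symmetry so is `(b, a)`.

With `k = ⌊n ^ (1 / 3)⌋` this gives `2 k ≥ 2 n ^ (1 / 3) - 2` vertices. They are distinct when
`n > 1`, since then `a ^ 2 < n` puts `(a, b)` strictly above the diagonal. The total number of
vertices is finite, because a lattice point with a large coordinate is the midpoint of two other
lattice points of `H_n`.
-/

noncomputable section

/-- The closed region on and above the positive branch of the hyperbola `x*y = n`. -/
def Hset (n : ℝ) : Set (ℝ × ℝ) := {q | 0 ≤ q.1 ∧ 0 ≤ q.2 ∧ n ≤ q.1 * q.2}

/-- The integer lattice `ℤ² ⊂ ℝ²`. -/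
def intLattice : Set (ℝ × ℝ) := {q | ∃ a b : ℤ, q = ((a : ℝ), (b : ℝ))}

section StrictMinimum

variable {𝕜 E : Type*} [Semiring 𝕜] [PartialOrder 𝕜] [AddCommMonoid E] [Module 𝕜 E]
  {f : E →ₗ[𝕜] 𝕜} {p : E}

theorem le_map_of_mem_insert {q : E} (hq : q ∈ insert p {q | f p < f q}) : f p ≤ f q := by
  rcases hq with rfl | hq
  exacts [le_rfl, le_of_lt hq]

variable [IsStrictOrderedRing 𝕜]

theorem lt_map_of_mem_openSegment {c : 𝕜} {x y z : E} (hx : c < f x) (hy : c ≤ f y)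
    (hz : z ∈ openSegment 𝕜 x y) : c < f z := by
  obtain ⟨α, β, hα, hβ, hαβ, rfl⟩ := hz
  calc c = α * c + β * c := by rw [← add_mul, hαβ, one_mul]
    _ < α * f x + β * f y :=
      add_lt_add_of_lt_of_le (mul_lt_mul_of_pos_left hx hα) (mul_le_mul_of_nonneg_left hy hβ.le)
    _ = f (α • x + β • y) := by simp

theorem convex_insert_lt_map (f : E →ₗ[𝕜] 𝕜) (p : E) : Convex 𝕜 (insert p {q | f p < f q}) := by
  refine convex_iff_openSegment_subset.2 fun x hx y hy z hz ↦ ?_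
  rcases hx with rfl | hx
  · rcases hy with rfl | hy
    · obtain ⟨α, β, -, -, hαβ, rfl⟩ := hz
      exact .inl (Convex.combo_self hαβ _)
    · exact .inr (lt_map_of_mem_openSegment hy le_rfl (openSegment_symm 𝕜 x y ▸ hz))
  · exact .inr (lt_map_of_mem_openSegment hx (le_map_of_mem_insert hy) hz)

theorem mem_extremePoints_insert_lt_map (f : E →ₗ[𝕜] 𝕜) (p : E) :
    p ∈ (insert p {q | f p < f q}).extremePoints 𝕜 := by
  refine mem_extremePoints_iff_left.2 ⟨Set.mem_insert _ _, fun x hx y hy hp ↦ ?_⟩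
  refine hx.resolve_right fun hx ↦ ?_
  exact (lt_map_of_mem_openSegment hx (le_map_of_mem_insert hy) hp).false

theorem mem_extremePoints_convexHull_of_forall_lt {S : Set E} (f : E →ₗ[𝕜] 𝕜) (hp : p ∈ S)
    (hmin : ∀ q ∈ S, q ≠ p → f p < f q) : p ∈ (convexHull 𝕜 S).extremePoints 𝕜 := by
  have hsub : convexHull 𝕜 S ⊆ insert p {q | f p < f q} :=
    convexHull_min (fun q hq ↦ or_iff_not_imp_left.2 (hmin q hq)) (convex_insert_lt_map f p)
  exact inter_extremePoints_subset_extremePoints_of_subset hsub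
    ⟨subset_convexHull 𝕜 S hp, mem_extremePoints_insert_lt_map f p⟩

end StrictMinimum

theorem two_mul_ncard_le_ncard_of_swap_mem {α : Type*} [Preorder α] {V P : Set (α × α)}
    (hV : V.Finite) (hswap : ∀ p ∈ V, p.swap ∈ V) (hPV : P ⊆ V) (hP : ∀ p ∈ P, p.1 < p.2) :
    2 * P.ncard ≤ V.ncard := by
  have hfin : P.Finite := hV.subset hPV
  have hswapPV : Prod.swap '' P ⊆ V := Set.image_subset_iff.2 fun p hp ↦ hswap p (hPV hp)
  have hdisj : Disjoint P (Prod.swap '' P) := by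
    rw [Set.disjoint_left]
    rintro _ hp ⟨q, hq, rfl⟩
    exact lt_asymm (hP _ hp) (hP q hq)
  calc 2 * P.ncard = P.ncard + (Prod.swap '' P).ncard := by
        rw [Set.ncard_image_of_injective _ Prod.swap_injective, two_mul]
    _ = (P ∪ Prod.swap '' P).ncard := (Set.ncard_union_eq hdisj hfin (hfin.image _)).symm
    _ ≤ V.ncard := Set.ncard_le_ncard (Set.union_subset hPV hswapPV) hV

/-- The set of vertices of the convex hull of the lattice points of `H_n`. -/
def hullVertices (n : ℝ) : Set (ℝ × ℝ) :=
  Set.extremePoints ℝ (convexHull ℝ (Hset n ∩ intLattice))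

theorem intCast_mem_Hset_inter_intLattice {n : ℝ} {x y : ℤ} :
    ((x : ℝ), (y : ℝ)) ∈ Hset n ∩ intLattice ↔ 0 ≤ x ∧ 0 ≤ y ∧ n ≤ x * y := by
  simp [Hset, intLattice]

theorem swap_image_Hset_inter_intLattice (n : ℝ) :
    Prod.swap '' (Hset n ∩ intLattice) = Hset n ∩ intLattice := by
  have hmaps : ∀ q ∈ Hset n ∩ intLattice, q.swap ∈ Hset n ∩ intLattice := by
    rintro _ ⟨⟨hx, hy, hxy⟩, x, y, rfl⟩
    exact ⟨⟨hy, hx, hxy.trans_eq (mul_comm _ _)⟩, y, x, rfl⟩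
  exact (Set.image_subset_iff.2 hmaps).antisymm fun q hq ↦ ⟨q.swap, hmaps q hq, q.swap_swap⟩

theorem swap_mem_hullVertices {n : ℝ} {p : ℝ × ℝ} (hp : p ∈ hullVertices n) :
    p.swap ∈ hullVertices n := by
  let e := LinearEquiv.prodComm ℝ ℝ ℝ
  have himage : e '' hullVertices n = hullVertices n := by
    rw [hullVertices, image_extremePoints, ← LinearEquiv.coe_coe, LinearMap.image_convexHull]
    exact congrArg (fun S ↦ Set.extremePoints ℝ (convexHull ℝ S))
      (swap_image_Hset_inter_intLattice n)
  exact himage ▸ Set.mem_image_of_mem e hp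

theorem fst_le_ceil_of_mem_hullVertices {n : ℝ} {p : ℝ × ℝ} (hp : p ∈ hullVertices n) :
    p.1 ≤ ⌈n⌉₊ := by
  by_contra! hlarge
  have hpS : p ∈ Hset n ∩ intLattice := extremePoints_convexHull_subset hp
  obtain ⟨x, y, rfl⟩ := hpS.2
  obtain ⟨hx, hy, hxy⟩ := intCast_mem_Hset_inter_intLattice.1 hpS
  have hceil : (⌈n⌉₊ : ℤ) < x := Int.cast_lt.1 (by simpa using hlarge)
  have hyR : (0 : ℝ) ≤ y := by exact_mod_cast hy
  have hright : ((x : ℝ), (y : ℝ)) + (1, 0) ∈ Hset n ∩ intLattice := by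
    have : n ≤ (x + 1 : ℤ) * (y : ℝ) := by push_cast; linarith
    simpa using intCast_mem_Hset_inter_intLattice.2 ⟨by omega, hy, this⟩
  have hleft : ((x : ℝ), (y : ℝ)) - (1, 0) ∈ Hset n ∩ intLattice := by
    have : n ≤ (x - 1 : ℤ) * (y : ℝ) := by
      rcases hy.eq_or_lt with rfl | hy0
      · simpa using hxy
      · calc n ≤ ⌈n⌉₊ := Nat.le_ceil n
          _ ≤ ((x - 1 : ℤ) : ℝ) := by exact_mod_cast (by omega : (⌈n⌉₊ : ℤ) ≤ x - 1)
          _ ≤ (x - 1 : ℤ) * (y : ℝ) := by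
            exact_mod_cast le_mul_of_one_le_right (by omega : 0 ≤ x - 1) hy0
    simpa using intCast_mem_Hset_inter_intLattice.2 ⟨by omega, hy, this⟩
  have hfixed := hp.2 (subset_convexHull ℝ _ hright) (subset_convexHull ℝ _ hleft)
    (mem_openSegment_add_sub _ _)
  simp at hfixed

theorem finite_hullVertices (n : ℝ) : (hullVertices n).Finite := by
  let box : Set ℤ := Set.Icc 0 ⌈n⌉₊
  refine (((Set.finite_Icc _ _).prod (Set.finite_Icc _ _) : (box ×ˢ box).Finite).image
    fun z ↦ ((z.1 : ℝ), (z.2 : ℝ))).subset fun p hp ↦ ?_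
  have hfst : p.1 ≤ ⌈n⌉₊ := fst_le_ceil_of_mem_hullVertices hp
  have hsnd : p.2 ≤ ⌈n⌉₊ := fst_le_ceil_of_mem_hullVertices (swap_mem_hullVertices hp)
  have hpS : p ∈ Hset n ∩ intLattice := extremePoints_convexHull_subset hp
  obtain ⟨x, y, rfl⟩ := hpS.2
  obtain ⟨hx, hy, -⟩ := intCast_mem_Hset_inter_intLattice.1 hpS
  have hxn : x ≤ ⌈n⌉₊ := Int.cast_le.1 (by simpa using hfst)
  have hyn : y ≤ ⌈n⌉₊ := Int.cast_le.1 (by simpa using hsnd)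
  exact ⟨(x, y), ⟨⟨hx, hxn⟩, hy, hyn⟩, rfl⟩

theorem fst_pos_of_mem_Hset {n : ℝ} (hn : 0 < n) {q : ℝ × ℝ} (hq : q ∈ Hset n) : 0 < q.1 :=
  pos_of_mul_pos_left (hn.trans_le hq.2.2) hq.2.1

theorem div_fst_le_snd_of_mem_Hset {n : ℝ} (hn : 0 < n) {q : ℝ × ℝ} (hq : q ∈ Hset n) :
    n / q.1 ≤ q.2 :=
  (div_le_iff₀' (fst_pos_of_mem_Hset hn hq)).2 hq.2.2

/-- Minus the slope of a supporting line of the convex hull at the vertex `(a, ⌈n / a⌉)`: the chord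
of `x ↦ n / x` over `[a, a + 1]` has slope `- n / (a (a + 1))`, and the extra `1` compensates the
rounding. -/
def supportSlope (n a : ℝ) : ℝ := n / (a * (a + 1)) + 1

theorem div_add_supportSlope_mul_sub {n a x : ℝ} (ha : 0 < a) (hx : x ≠ 0) :
    n / x + supportSlope n a * x - (n / a + supportSlope n a * a) =
      (x - a) * (1 + n * (x - a - 1) / (a * (a + 1) * x)) := by
  have ha' : a + 1 ≠ 0 := by positivity
  unfold supportSlope
  field_simp
  ring

theorem div_add_supportSlope_mul_add_one_le {n a x : ℝ} (hn : 0 ≤ n) (ha : 0 < a)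
    (han : (a - 1) * a * (a + 1) ≤ n) (hx : 0 < x) (hxa : 1 ≤ |x - a|) :
    n / a + supportSlope n a * a + 1 ≤ n / x + supportSlope n a * x := by
  suffices 1 ≤ (x - a) * (1 + n * (x - a - 1) / (a * (a + 1) * x)) by
    linarith [div_add_supportSlope_mul_sub (n := n) ha hx.ne']
  rcases le_abs.1 hxa with hright | hleft
  · have hratio : 0 ≤ n * (x - a - 1) / (a * (a + 1) * x) :=
      div_nonneg (mul_nonneg hn (by linarith)) (by positivity)
    exact one_le_mul_of_one_le_of_one_le hright (by linarith)
  · have hratio : n * (x - a - 1) / (a * (a + 1) * x) ≤ -2 := by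
      rw [div_le_iff₀ (by positivity)]
      have hcube : a * (a + 1) * x ≤ n := calc
        a * (a + 1) * x ≤ a * (a + 1) * (a - 1) := by gcongr; linarith
        _ = (a - 1) * a * (a + 1) := by ring
        _ ≤ n := han
      have hdist : n * 2 ≤ n * (a + 1 - x) := by gcongr; linarith
      linarith
    rw [← neg_mul_neg]
    exact one_le_mul_of_one_le_of_one_le hleft (by linarith)

/-- The lowest lattice point of `H_n` on the vertical line `x = a`, for `a ≥ 1`. -/
def lowestPoint (n : ℝ) (a : ℕ) : ℝ × ℝ := (a, ⌈n / a⌉₊)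

section LowestPoint

variable {n : ℝ} {a : ℕ}

theorem lowestPoint_injective (n : ℝ) : Function.Injective (lowestPoint n) := fun _ _ h ↦
  Nat.cast_injective (congrArg Prod.fst h)

theorem lowestPoint_mem (n : ℝ) (ha : 0 < a) : lowestPoint n a ∈ Hset n ∩ intLattice := by
  refine ⟨⟨Nat.cast_nonneg _, Nat.cast_nonneg _, ?_⟩, a, ⌈n / a⌉₊, by simp [lowestPoint]⟩
  exact (div_le_iff₀' (Nat.cast_pos.2 ha)).1 (Nat.le_ceil _)

theorem lowestPoint_snd_le {q : ℝ × ℝ} (hn : 0 < n) (hq : q ∈ Hset n ∩ intLattice)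
    (hqa : q.1 = a) : (lowestPoint n a).2 ≤ q.2 := by
  have hdiv := div_fst_le_snd_of_mem_Hset hn hq.1
  obtain ⟨⟨-, hy, -⟩, x, y, rfl⟩ := hq
  lift y to ℕ using Int.cast_nonneg_iff.1 hy
  rw [hqa] at hdiv
  simpa [lowestPoint] using hdiv

theorem supportSlope_mul_lowestPoint_fst_add_snd_lt {q : ℝ × ℝ} (hn : 0 < n) (ha : 0 < a)
    (han : ((a : ℝ) - 1) * a * (a + 1) ≤ n) (hq : q ∈ Hset n ∩ intLattice)
    (hne : q ≠ lowestPoint n a) :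
    supportSlope n a * (lowestPoint n a).1 + (lowestPoint n a).2 <
      supportSlope n a * q.1 + q.2 := by
  by_cases hqa : q.1 = a
  · have hsnd : (lowestPoint n a).2 < q.2 :=
      (lowestPoint_snd_le hn hq hqa).lt_of_ne fun h ↦ hne (Prod.ext hqa h.symm)
    rw [hqa]
    exact add_lt_add_right hsnd _
  · have hsep : 1 ≤ |q.1 - a| := by
      obtain ⟨-, x, y, rfl⟩ := hq
      have hxa : x - a ≠ 0 := sub_ne_zero.2 fun h ↦ hqa (by simp [h])
      simpa using Int.cast_le (R := ℝ).2 (Int.one_le_abs hxa)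
    have hgap := div_add_supportSlope_mul_add_one_le hn.le (Nat.cast_pos.2 ha) han
      (fst_pos_of_mem_Hset hn hq.1) hsep
    have hround : (lowestPoint n a).2 < n / a + 1 := Nat.ceil_lt_add_one (by positivity)
    have hdiv := div_fst_le_snd_of_mem_Hset hn hq.1
    simp only [lowestPoint] at hround ⊢
    linarith

theorem lowestPoint_mem_hullVertices (hn : 0 < n) (ha : 0 < a)
    (han : ((a : ℝ) - 1) * a * (a + 1) ≤ n) : lowestPoint n a ∈ hullVertices n :=
  mem_extremePoints_convexHull_of_forall_lt
    (supportSlope n a • LinearMap.fst ℝ ℝ ℝ + LinearMap.snd ℝ ℝ ℝ) (lowestPoint_mem n ha)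
    fun _ hq hne ↦ supportSlope_mul_lowestPoint_fst_add_snd_lt hn ha han hq hne

theorem sq_lt_of_sub_one_mul_mul_add_one_le (hn : 1 < n)
    (han : ((a : ℝ) - 1) * a * (a + 1) ≤ n) : (a : ℝ) ^ 2 < n := by
  rcases le_or_gt a 1 with ha | ha
  · exact (pow_le_one₀ a.cast_nonneg (by exact_mod_cast ha)).trans_lt hn
  · have ha2 : (2 : ℝ) ≤ a := by exact_mod_cast ha
    nlinarith

theorem lowestPoint_fst_lt_snd (hn : 1 < n) (ha : 0 < a)
    (han : ((a : ℝ) - 1) * a * (a + 1) ≤ n) : (lowestPoint n a).1 < (lowestPoint n a).2 := by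
  have hdiv : (a : ℝ) < n / a := by
    rw [lt_div_iff₀ (Nat.cast_pos.2 ha), ← sq]
    exact sq_lt_of_sub_one_mul_mul_add_one_le hn han
  exact hdiv.trans_le (Nat.le_ceil _)

end LowestPoint

theorem two_mul_le_ncard_hullVertices {n : ℝ} {k : ℕ} (hn : 1 < n)
    (hk : ((k : ℝ) - 1) * k * (k + 1) ≤ n) : 2 * k ≤ (hullVertices n).ncard := by
  have hcube : ∀ a ∈ Set.Icc 1 k, ((a : ℝ) - 1) * a * (a + 1) ≤ n := by
    rintro a ⟨ha, hak⟩
    have ha1 : (0 : ℝ) ≤ a - 1 := sub_nonneg.2 (by exact_mod_cast ha)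
    have hk1 : (0 : ℝ) ≤ k - 1 := ha1.trans (by gcongr)
    exact le_trans (by gcongr) hk
  have hcard : (lowestPoint n '' Set.Icc 1 k).ncard = k := by
    simp [Set.ncard_image_of_injective _ (lowestPoint_injective n), Set.ncard_eq_toFinset_card']
  rw [← hcard]
  refine two_mul_ncard_le_ncard_of_swap_mem (finite_hullVertices n)
    (fun _ ↦ swap_mem_hullVertices) ?_ ?_
  · rintro _ ⟨a, ha, rfl⟩
    exact lowestPoint_mem_hullVertices (zero_lt_one.trans hn) ha.1 (hcube a ha)
  · rintro _ ⟨a, ha, rfl⟩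
    exact lowestPoint_fst_lt_snd hn ha.1 (hcube a ha)

theorem statement0_general (n : ℝ) (hn : 0 ≤ n) :
    2 * n ^ ((1 : ℝ) / 3) - 2 ≤
      ((Set.extremePoints ℝ (convexHull ℝ (Hset n ∩ intLattice))).ncard : ℝ) := by
  rcases le_or_gt n 1 with hn1 | hn1
  · have hroot : n ^ ((1 : ℝ) / 3) ≤ 1 := Real.rpow_le_one hn hn1 (by norm_num)
    exact le_trans (b := 0) (by linarith) (Nat.cast_nonneg _)
  · set r := n ^ ((1 : ℝ) / 3) with hr
    have hr3 : r ^ 3 = n := by simpa [hr] using Real.rpow_inv_natCast_pow hn three_ne_zero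
    have hk : ((⌊r⌋₊ : ℝ) - 1) * ⌊r⌋₊ * (⌊r⌋₊ + 1) ≤ n := calc
      ((⌊r⌋₊ : ℝ) - 1) * ⌊r⌋₊ * (⌊r⌋₊ + 1) = (⌊r⌋₊ : ℝ) ^ 3 - ⌊r⌋₊ := by ring
      _ ≤ (⌊r⌋₊ : ℝ) ^ 3 := sub_le_self _ (Nat.cast_nonneg _)
      _ ≤ r ^ 3 := by gcongr; exact Nat.floor_le (by positivity)
      _ = n := hr3
    calc 2 * r - 2 ≤ ((2 * ⌊r⌋₊ : ℕ) : ℝ) := by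
          push_cast
          linarith [Nat.lt_floor_add_one r]
      _ ≤ (hullVertices n).ncard := Nat.cast_le.2 (two_mul_le_ncard_hullVertices hn1 hk)

/-- For every positive integer `n`, the convex hull of `H_n ∩ ℤ²` has at least
`2 n^(1/3) - 2` vertices (extreme points). -/
theorem statement0 (n : ℕ) (hn : 0 < n) :
    2 * (n : ℝ) ^ ((1 : ℝ) / 3) - 2 ≤
      ((Set.extremePoints ℝ (convexHull ℝ (Hset n ∩ intLattice))).ncard : ℝ) :=
  statement0_general n n.cast_nonneg

end
end

section
/- Let a, b, c ∈ ℤ with Δ := √(b² − 4ac) a positive integer, let x₀, y₀ ∈ ℝ and n ∈ ℝ with n ≠ 0, and let h be the hyperbola {(x,y) ∈ ℝ² : a(x−x₀)² + b(x−x₀)(y−y₀) + c(y−y₀)² = n}. Let H be the closure of one of the two convex connected components of ℝ² \ h, and set m := max{2Δ, |n|/Δ}. Then the number of vertices (extreme points) of conv(H ∩ ℤ²) is at most C·m^{1/3}·(log₂ m + 2), where C = 2^{7/3}·π^{2/3}. -/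
/-!
Since `b² - 4ac = Δ²`, the quadratic form factors over `ℤ` into two linear forms of determinant `Δ`.
Taken as coordinates `S` and `T`, with suitable signs, they turn the hyperbola into `S T = N` with
`N = |n|`, the region `H` into `{S > 0, S T ≥ N}`, and the integer points into a translate of a
sublattice of `ℤ²` of index `Δ`, which contains `(Δ, 0)` and `(0, Δ)`.

Let `(S, T)` be a vertex of the hull. Both `(S, T) ± (0, Δ)` and `(S, T) ± (Δ, 0)` are lattice
points, so `S T < N + Δ min(S, T)`. The hull is closed under increasing either coordinate, so the
vertices form a strictly decreasing, strictly convex chain. Since the coordinates of lattice points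
differ by integers, at most one vertex has `S < 1`. By symmetry consider the vertices with `S ≤ T`;
they satisfy `S < m`, so at most `log₂ m + 1` dyadic intervals `[σ, 2σ)` contain a value `S ≥ 1`.

The vertices with `S ∈ [σ, 2σ)` lie in a box of width `X = σ` and height `Y = Δ + N / (2σ)`, and
`X Y ≤ 3mΔ/2`. Give an edge `(x, -y)` of their chain the weight `w = x/X + y/Y`. The weights add up
to at most `2`, so at most `2 m^(1/3)` edges have weight above `m^(-1/3)`. The cross product of two
edges is a nonzero multiple of `Δ`, and it equals `X Y w w'` times the difference of the two numbers
`(x/X)/w ∈ [0, 1]`. Hence these numbers are `(3/2 m^(1/3))⁻¹`-separated for the light edges, and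
there are at most `3/2 m^(1/3) + 1` light edges. So every dyadic interval carries at most
`2 + 7/2 m^(1/3)` vertices, and summing up gives a bound below the required one.
-/

noncomputable section

/-- The hyperbola `a(x-x₀)² + b(x-x₀)(y-y₀) + c(y-y₀)² = n`. -/
def hypSet (a b c : ℤ) (x₀ y₀ n : ℝ) : Set (ℝ × ℝ) :=
  {q | (a : ℝ) * (q.1 - x₀) ^ 2 + (b : ℝ) * (q.1 - x₀) * (q.2 - y₀)
      + (c : ℝ) * (q.2 - y₀) ^ 2 = n}

/-- The determinant of two planar vectors; twice the signed area of the triangle they span. -/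
def cross {R : Type*} [CommRing R] (u v : R × R) : R := u.1 * v.2 - u.2 * v.1

/-! ### Short edges in a box -/

section EdgeCount

variable {ι : Type*} {I : Finset ι}

lemma card_le_of_pairwise_le_abs_sub {f : ι → ℝ} {l u δ : ℝ} (hδ : 0 < δ) (hlu : l ≤ u)
    (hf : ∀ i ∈ I, f i ∈ Set.Icc l u)
    (hsep : (I : Set ι).Pairwise fun i j => δ ≤ |f i - f j|) :
    (I.card : ℝ) ≤ (u - l) / δ + 1 := by
  have hmaps : Set.MapsTo (fun i => ⌊(f i - l) / δ⌋₊) I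
      (Finset.range (⌊(u - l) / δ⌋₊ + 1)) := fun i hi => by
    rw [Finset.mem_coe, Finset.mem_range, Nat.lt_succ_iff]
    exact Nat.floor_mono (by gcongr; exact (hf i hi).2)
  have hinj : Set.InjOn (fun i => ⌊(f i - l) / δ⌋₊) I := by
    intro i hi j hj hij
    by_contra hne
    have hnonneg : ∀ k ∈ I, 0 ≤ (f k - l) / δ := fun k hk =>
      div_nonneg (sub_nonneg.2 (hf k hk).1) hδ.le
    have hdist : |(f i - l) / δ - (f j - l) / δ| < 1 := by
      refine Int.abs_sub_lt_one_of_floor_eq_floor ?_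
      rw [← Int.natCast_floor_eq_floor (hnonneg i hi), ← Int.natCast_floor_eq_floor (hnonneg j hj)]
      exact congrArg _ hij
    rw [← sub_div, sub_sub_sub_cancel_right, abs_div, abs_of_pos hδ, div_lt_one hδ] at hdist
    exact hdist.not_ge (hsep hi hj hne)
  have hcard := Finset.card_le_card_of_injOn _ hmaps hinj
  rw [Finset.card_range] at hcard
  calc (I.card : ℝ) ≤ (⌊(u - l) / δ⌋₊ : ℝ) + 1 := by exact_mod_cast hcard
    _ ≤ (u - l) / δ + 1 := by
      gcongr
      exact Nat.floor_le (div_nonneg (sub_nonneg.2 hlu) hδ.le)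

lemma card_filter_lt_mul_le_sum {w : ι → ℝ} (hw : ∀ i ∈ I, 0 ≤ w i) (ε : ℝ) :
    ((I.filter fun i => ε < w i).card : ℝ) * ε ≤ ∑ i ∈ I, w i := by
  rw [← nsmul_eq_mul]
  calc (I.filter fun i => ε < w i).card • ε ≤ ∑ i ∈ I.filter fun i => ε < w i, w i :=
        Finset.card_nsmul_le_sum _ _ _ fun i hi => (Finset.mem_filter.1 hi).2.le
    _ ≤ ∑ i ∈ I, w i :=
        Finset.sum_le_sum_of_subset_of_nonneg (Finset.filter_subset _ _) fun i hi _ => hw i hi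

lemma cross_eq_mul_sub_div {K : Type*} [Field K] {u v : K × K} (hu : u.1 + u.2 ≠ 0)
    (hv : v.1 + v.2 ≠ 0) :
    cross u v = (u.1 + u.2) * (v.1 + v.2) * (u.1 / (u.1 + u.2) - v.1 / (v.1 + v.2)) := by
  rw [cross]
  field_simp
  ring

/-- The weight `x + y` splits the edges `(x, y)`: few are heavy because the weights add up to at
most `2`, and few are light because the ratios `x / (x + y)` of light edges are far apart. -/
lemma card_le_of_le_abs_cross_of_sum_le_one {e : ι → ℝ × ℝ} {δ μ : ℝ} (hδ : 0 < δ) (hμ : 0 < μ)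
    (hpos : ∀ i ∈ I, 0 < (e i).1 ∧ 0 < (e i).2)
    (hcross : (I : Set ι).Pairwise fun i j => δ ≤ |cross (e i) (e j)|)
    (hfst : ∑ i ∈ I, (e i).1 ≤ 1) (hsnd : ∑ i ∈ I, (e i).2 ≤ 1) :
    (I.card : ℝ) ≤ 2 * μ + 1 / (δ * μ ^ 2) + 1 := by
  set w : ι → ℝ := fun i => (e i).1 + (e i).2
  have hwpos : ∀ i ∈ I, 0 < w i := fun i hi => add_pos (hpos i hi).1 (hpos i hi).2
  have heavy : ((I.filter fun i => 1 / μ < w i).card : ℝ) ≤ 2 * μ := by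
    rw [← div_le_iff₀ hμ, div_eq_mul_one_div]
    refine (card_filter_lt_mul_le_sum (fun i hi => (hwpos i hi).le) _).trans ?_
    rw [Finset.sum_add_distrib]
    linarith
  have light : ((I.filter fun i => ¬ 1 / μ < w i).card : ℝ) ≤ 1 / (δ * μ ^ 2) + 1 := by
    suffices h : _ ≤ (1 - 0) / (δ * μ ^ 2) + 1 by rwa [sub_zero] at h
    refine card_le_of_pairwise_le_abs_sub (f := fun i => (e i).1 / w i) (by positivity) zero_le_one
      (fun i hi => ?_) fun i hi j hj hij => ?_
    · obtain ⟨hi, -⟩ := Finset.mem_filter.1 hi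
      exact ⟨(div_pos (hpos i hi).1 (hwpos i hi)).le,
        div_le_one_of_le₀ (le_add_of_nonneg_right (hpos i hi).2.le) (hwpos i hi).le⟩
    · obtain ⟨hi, hwi⟩ := Finset.mem_filter.1 hi
      obtain ⟨hj, hwj⟩ := Finset.mem_filter.1 hj
      have hww : 0 < w i * w j := mul_pos (hwpos i hi) (hwpos j hj)
      have hww_le : w i * w j ≤ 1 / μ * (1 / μ) :=
        mul_le_mul (not_lt.1 hwi) (not_lt.1 hwj) (hwpos j hj).le (by positivity)
      have hδ_le : δ ≤ 1 / μ * (1 / μ) * |(e i).1 / w i - (e j).1 / w j| := by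
        refine (hcross hi hj hij).trans ?_
        rw [cross_eq_mul_sub_div (hwpos i hi).ne' (hwpos j hj).ne', abs_mul, abs_of_pos hww]
        gcongr
      calc δ * μ ^ 2 ≤ 1 / μ * (1 / μ) * |(e i).1 / w i - (e j).1 / w j| * μ ^ 2 := by gcongr
        _ = |(e i).1 / w i - (e j).1 / w j| := by field_simp
  rw [← Finset.card_filter_add_card_filter_not (s := I) fun i => 1 / μ < w i]
  push_cast
  linarith

lemma card_le_of_le_abs_cross {e : ι → ℝ × ℝ} {X Y δ μ : ℝ} (hX : 0 < X) (hY : 0 < Y)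
    (hδ : 0 < δ) (hμ : 0 < μ) (hpos : ∀ i ∈ I, 0 < (e i).1 ∧ 0 < (e i).2)
    (hcross : (I : Set ι).Pairwise fun i j => δ ≤ |cross (e i) (e j)|)
    (hfst : ∑ i ∈ I, (e i).1 ≤ X) (hsnd : ∑ i ∈ I, (e i).2 ≤ Y) :
    (I.card : ℝ) ≤ 2 * μ + X * Y / (δ * μ ^ 2) + 1 := by
  have key := card_le_of_le_abs_cross_of_sum_le_one (I := I)
    (e := fun i => ((e i).1 / X, (e i).2 / Y)) (δ := δ / (X * Y)) (by positivity) hμ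
    (fun i hi => ⟨div_pos (hpos i hi).1 hX, div_pos (hpos i hi).2 hY⟩)
    (fun i hi j hj hij => ?_)
    (by rwa [← Finset.sum_div, div_le_one hX]) (by rwa [← Finset.sum_div, div_le_one hY])
  · rwa [div_mul_eq_mul_div, one_div_div] at key
  · have hscale : cross ((e i).1 / X, (e i).2 / Y) ((e j).1 / X, (e j).2 / Y)
        = cross (e i) (e j) / (X * Y) := by
      simp only [cross]
      field_simp
    beta_reduce
    rw [hscale, abs_div, abs_of_pos (mul_pos hX hY)]
    have := hcross hi hj hij
    gcongr

end EdgeCount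

/-! ### Extreme points of convex upper sets -/

section ExtremePoints

variable {E : Type*} [AddCommGroup E] [Module ℝ E]

lemma eq_zero_of_add_mem_of_sub_mem {P : Set E} {v d : E} (hv : v ∈ P.extremePoints ℝ)
    (hadd : v + d ∈ P) (hsub : v - d ∈ P) : d = 0 := by
  have hmid : v ∈ openSegment ℝ (v + d) (v - d) :=
    ⟨1 / 2, 1 / 2, by norm_num, by norm_num, by norm_num, by module⟩
  exact add_eq_left.1 ((mem_extremePoints.1 hv).2 _ hadd _ hsub hmid).1

lemma eq_of_le_of_mem_extremePoints [PartialOrder E] [IsOrderedAddMonoid E] {P : Set E}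
    (hP : IsUpperSet P) {z w : E} (hz : z ∈ P) (hw : w ∈ P.extremePoints ℝ) (hzw : z ≤ w) :
    z = w := by
  have hadd : w + (w - z) ∈ P :=
    hP (le_add_of_nonneg_right (sub_nonneg.2 hzw)) (extremePoints_subset hw)
  have hsub : w - (w - z) ∈ P := by rwa [sub_sub_cancel]
  exact (sub_eq_zero.1 (eq_zero_of_add_mem_of_sub_mem hw hadd hsub)).symm

lemma image_extremePoints_convexHull {F : Type*} [AddCommGroup F] [Module ℝ F] (f : E ≃ᵃ[ℝ] F)
    (A : Set E) :
    f '' (convexHull ℝ A).extremePoints ℝ = (convexHull ℝ (f '' A)).extremePoints ℝ := by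
  have himage : f '' convexHull ℝ A = convexHull ℝ (f '' A) :=
    f.toAffineMap.image_convexHull A
  have hseg : ∀ u w : E, openSegment ℝ (f u) (f w) = f '' openSegment ℝ u w := fun u w =>
    (image_openSegment ℝ f.toAffineMap u w).symm
  rw [← himage]
  ext v
  obtain ⟨v, rfl⟩ := f.surjective v
  simp only [mem_extremePoints, Set.forall_mem_image, hseg, f.injective.mem_set_image,
    f.injective.eq_iff]

variable {P : Set (ℝ × ℝ)} {u v w : ℝ × ℝ}

lemma snd_lt_snd_of_mem_extremePoints (hP : IsUpperSet P) (hv : v ∈ P.extremePoints ℝ)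
    (hw : w ∈ P.extremePoints ℝ) (hne : v ≠ w) (hle : v.1 ≤ w.1) : w.2 < v.2 := by
  by_contra! hge
  exact hne (eq_of_le_of_mem_extremePoints hP (extremePoints_subset hv) hw ⟨hle, hge⟩)

lemma injOn_fst_extremePoints (hP : IsUpperSet P) : Set.InjOn Prod.fst (P.extremePoints ℝ) := by
  intro v hv w hw heq
  by_contra hne
  exact (snd_lt_snd_of_mem_extremePoints hP hv hw hne heq.le).asymm
    (snd_lt_snd_of_mem_extremePoints hP hw hv (Ne.symm hne) heq.ge)

lemma cross_sub_pos_of_mem_extremePoints (hconv : Convex ℝ P) (hP : IsUpperSet P)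
    (hu : u ∈ P) (hv : v ∈ P.extremePoints ℝ) (hw : w ∈ P) (huv : u.1 < v.1) (hvw : v.1 < w.1) :
    0 < cross (v - u) (w - v) := by
  by_contra! hle
  simp only [cross, Prod.fst_sub, Prod.snd_sub] at hle
  have hd : 0 < w.1 - u.1 := by linarith
  set t : ℝ := (v.1 - u.1) / (w.1 - u.1)
  have ht0 : 0 < t := div_pos (by linarith) hd
  have ht1 : t < 1 := (div_lt_one hd).2 (by linarith)
  have ht : t * (w.1 - u.1) = v.1 - u.1 := div_mul_cancel₀ _ hd.ne'
  set c : ℝ × ℝ := (1 - t) • u + t • w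
  have hc : c ∈ openSegment ℝ u w := ⟨1 - t, t, by linarith, ht0, by ring, rfl⟩
  have hc1 : c.1 = v.1 := by
    simp only [c, Prod.fst_add, Prod.smul_fst, smul_eq_mul]
    linarith
  have hc2 : c.2 ≤ v.2 := by
    simp only [c, Prod.snd_add, Prod.smul_snd, smul_eq_mul]
    refine le_of_mul_le_mul_right ?_ hd
    linear_combination hle + (w.2 - u.2) * ht
  have hcv : c = v := eq_of_le_of_mem_extremePoints hP
    (hconv.openSegment_subset hu hw hc) hv ⟨hc1.le, hc2⟩
  have huv' := ((mem_extremePoints.1 hv).2 u hu w hw (hcv ▸ hc)).1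
  exact huv.ne (congrArg Prod.fst huv')

end ExtremePoints

lemma cross_pos_trans {u v w : ℝ × ℝ} (hu : 0 < u.1) (hv : 0 < v.1) (hw : 0 < w.1)
    (huv : 0 < cross u v) (hvw : 0 < cross v w) : 0 < cross u w := by
  have hsum : v.1 * cross u w = w.1 * cross u v + u.1 * cross v w := by
    simp only [cross]
    ring
  refine pos_of_mul_pos_right (hsum ▸ ?_) hv.le
  positivity

lemma exists_strictMonoOn_enumeration {ι α : Type*} [LinearOrder α] {s : Finset ι} {f : ι → α}
    (hf : Set.InjOn f s) {k : ℕ} (hk : s.card = k + 1) :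
    ∃ v : ℕ → ι, (∀ i, v i ∈ s) ∧ StrictMonoOn (f ∘ v) (Set.Iic k) := by
  classical
  have hcard : (s.image f).card = k + 1 := by rw [Finset.card_image_of_injOn hf, hk]
  have hex : ∀ i : Fin (k + 1), ∃ v ∈ s, f v = (s.image f).orderEmbOfFin hcard i := fun i =>
    Finset.mem_image.1 (Finset.orderEmbOfFin_mem _ hcard i)
  choose v hvs hv using hex
  refine ⟨fun i => v (Fin.ofNat (k + 1) i), fun i => hvs _, fun i hi j hj hij => ?_⟩
  simp only [Function.comp_apply, hv]
  refine (Finset.orderEmbOfFin _ hcard).strictMono ?_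
  simpa only [Fin.lt_def, Fin.ofNat, Nat.mod_eq_of_lt (Nat.lt_succ_of_le hi),
    Nat.mod_eq_of_lt (Nat.lt_succ_of_le hj)] using hij

/-- The chord from `v (i + 1)` to `v j` mediates between two edges that are not adjacent. -/
lemma cross_edges_pos {P : Set (ℝ × ℝ)} (hconv : Convex ℝ P) (hP : IsUpperSet P) {k : ℕ}
    {v : ℕ → ℝ × ℝ} (hv : ∀ i, v i ∈ P.extremePoints ℝ)
    (hmono : StrictMonoOn (fun i => (v i).1) (Set.Iic k)) {i j : ℕ} (hij : i < j) (hj : j < k) :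
    0 < cross (v (i + 1) - v i) (v (j + 1) - v j) := by
  have hlt : ∀ a b, a < b → b ≤ k → (v a).1 < (v b).1 := fun a b hab hb =>
    hmono (hab.le.trans hb) hb hab
  have hvP : ∀ i, v i ∈ P := fun i => extremePoints_subset (hv i)
  have hturn : ∀ a b c, a < b → b < c → c ≤ k → 0 < cross (v b - v a) (v c - v b) :=
    fun a b c hab hbc hc => cross_sub_pos_of_mem_extremePoints hconv hP (hvP a) (hv b) (hvP c)
      (hlt a b hab (by lia)) (hlt b c hbc hc)
  rcases (Nat.succ_le_of_lt hij).eq_or_lt with rfl | hgap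
  · exact hturn i (i + 1) (i + 2) (by lia) (by lia) (by lia)
  · exact cross_pos_trans (sub_pos.2 (hlt _ _ (Nat.lt_succ_self i) (by lia)))
      (sub_pos.2 (hlt _ _ hgap hj.le)) (sub_pos.2 (hlt _ _ (Nat.lt_succ_self j) (by lia)))
      (hturn i (i + 1) j (by lia) hgap hj.le) (hturn (i + 1) j (j + 1) hgap (by lia) (by lia))

lemma abs_cross_comm (u v : ℝ × ℝ) : |cross u v| = |cross v u| := by
  rw [← abs_neg]
  simp only [cross]
  ring_nf

lemma length_le_of_le_cross_edges {k : ℕ} {v : ℕ → ℝ × ℝ} {X Y δ μ : ℝ} (hX : 0 < X) (hY : 0 < Y)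
    (hδ : 0 < δ) (hμ : 0 < μ) (hfst : ∀ i < k, (v i).1 < (v (i + 1)).1)
    (hsnd : ∀ i < k, (v (i + 1)).2 < (v i).2)
    (hedges : ∀ i j, i < j → j < k → δ ≤ cross (v (i + 1) - v i) (v (j + 1) - v j))
    (hwidth : (v k).1 - (v 0).1 ≤ X) (hheight : (v 0).2 - (v k).2 ≤ Y) :
    (k : ℝ) ≤ 2 * μ + X * Y / (δ * μ ^ 2) + 1 := by
  -- reflecting the descending edges makes both coordinates positive
  set e : ℕ → ℝ × ℝ := fun i => ((v (i + 1)).1 - (v i).1, (v i).2 - (v (i + 1)).2) with he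
  have hreflect : ∀ i j, cross (e i) (e j) = -cross (v (i + 1) - v i) (v (j + 1) - v j) :=
    fun i j => by
      simp only [he, cross, Prod.fst_sub, Prod.snd_sub]
      ring
  have hcross : ∀ i j, i < j → j < k → δ ≤ |cross (e i) (e j)| := fun i j hij hj => by
    rw [hreflect, abs_neg]
    exact (hedges i j hij hj).trans (le_abs_self _)
  have hcard := card_le_of_le_abs_cross (I := Finset.range k) (e := e) hX hY hδ hμ
    (fun i hi => ⟨sub_pos.2 (hfst i (Finset.mem_range.1 hi)),
      sub_pos.2 (hsnd i (Finset.mem_range.1 hi))⟩)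
    (fun i hi j hj hij => ?_) ?_ ?_
  · rwa [Finset.card_range] at hcard
  · rw [Finset.mem_coe, Finset.mem_range] at hi hj
    rcases hij.lt_or_gt with h | h
    · exact hcross i j h hj
    · exact abs_cross_comm (e j) (e i) ▸ hcross j i h hi
  · rwa [Finset.sum_range_sub (fun i => (v i).1)]
  · rwa [Finset.sum_range_sub' (fun i => (v i).2)]

lemma card_le_of_subset_extremePoints {P : Set (ℝ × ℝ)} (hconv : Convex ℝ P) (hP : IsUpperSet P)
    {F : Finset (ℝ × ℝ)} (hF : (F : Set (ℝ × ℝ)) ⊆ P.extremePoints ℝ) {X Y l₁ l₂ δ μ : ℝ}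
    (hX : 0 < X) (hY : 0 < Y) (hδ : 0 < δ) (hμ : 0 < μ)
    (hbox : ∀ v ∈ F, v.1 ∈ Set.Icc l₁ (l₁ + X) ∧ v.2 ∈ Set.Icc l₂ (l₂ + Y))
    (hcross : ∀ u ∈ F, ∀ v ∈ F, ∀ w ∈ F, ∀ z ∈ F,
      0 < cross (v - u) (z - w) → δ ≤ cross (v - u) (z - w)) :
    (F.card : ℝ) ≤ 2 * μ + X * Y / (δ * μ ^ 2) + 2 := by
  obtain h0 | ⟨k, hk⟩ : F.card = 0 ∨ ∃ k, F.card = k + 1 :=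
    (Nat.eq_zero_or_eq_succ_pred _).imp_right fun h => ⟨_, h⟩
  · rw [h0, Nat.cast_zero]
    positivity
  obtain ⟨v, hvF, hmono⟩ :=
    exists_strictMonoOn_enumeration ((injOn_fst_extremePoints hP).mono hF) hk
  have hv : ∀ i, v i ∈ P.extremePoints ℝ := fun i => hF (hvF i)
  have hfst : ∀ i < k, (v i).1 < (v (i + 1)).1 := fun i hi =>
    hmono hi.le (Nat.succ_le_of_lt hi) (Nat.lt_succ_self i)
  have hsnd : ∀ i < k, (v (i + 1)).2 < (v i).2 := fun i hi =>
    snd_lt_snd_of_mem_extremePoints hP (hv i) (hv _) (fun h => (hfst i hi).ne (congrArg Prod.fst h))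
      (hfst i hi).le
  have hlength := length_le_of_le_cross_edges hX hY hδ hμ hfst hsnd
    (fun i j hij hj => hcross _ (hvF _) _ (hvF _) _ (hvF _) _ (hvF _)
      (cross_edges_pos hconv hP hv hmono hij hj))
    (by linarith [(hbox _ (hvF 0)).1.1, (hbox _ (hvF k)).1.2])
    (by linarith [(hbox _ (hvF 0)).2.2, (hbox _ (hvF k)).2.1])
  rw [hk]
  push_cast
  linarith

/-! ### Index and determinant of a planar lattice -/

lemma linearIndependent_pair_of_cross_ne_zero {R : Type*} [CommRing R] [IsDomain R] {v w : R × R}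
    (h : cross v w ≠ 0) : LinearIndependent R ![v, w] := by
  refine LinearIndependent.pair_iff.2 fun s t hst => ?_
  have h₁ : s * v.1 + t * w.1 = 0 := congrArg Prod.fst hst
  have h₂ : s * v.2 + t * w.2 = 0 := congrArg Prod.snd hst
  refine ⟨eq_zero_of_ne_zero_of_mul_right_eq_zero h ?_,
    eq_zero_of_ne_zero_of_mul_right_eq_zero h ?_⟩ <;> rw [cross]
  · linear_combination w.2 * h₁ - w.1 * h₂
  · linear_combination v.1 * h₂ - v.2 * h₁

lemma det_finTwoProd_eq_cross {R : Type*} [CommRing R] (v w : R × R) :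
    (Module.Basis.finTwoProd R).det ![v, w] = cross v w := by
  rw [Module.Basis.det_apply, Matrix.det_fin_two]
  simp [Module.Basis.toMatrix_apply, cross, mul_comm]

lemma index_closure_pair {v w : ℤ × ℤ} (h : cross v w ≠ 0) :
    (AddSubgroup.closure {v, w}).index = (cross v w).natAbs := by
  have hspan : AddSubgroup.closure {v, w} =
      (Submodule.span ℤ (Set.range ![v, w])).toAddSubgroup := by
    rw [Submodule.span_int_eq_addSubgroupClosure, Matrix.range_cons_cons_empty]
  rw [hspan, ← det_finTwoProd_eq_cross,
    AddSubgroup.index_eq_natAbs_det (Module.Basis.finTwoProd ℤ) _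
      (Module.Basis.span (linearIndependent_pair_of_cross_ne_zero h))]
  congr 2
  ext1 i
  exact congrArg _ (Module.Basis.span_apply _ i)

lemma index_dvd_cross (Λ : AddSubgroup (ℤ × ℤ)) {v w : ℤ × ℤ} (hv : v ∈ Λ) (hw : w ∈ Λ) :
    (Λ.index : ℤ) ∣ cross v w := by
  by_cases h : cross v w = 0
  · exact h ▸ dvd_zero _
  · rw [Int.natCast_dvd, ← index_closure_pair h]
    exact AddSubgroup.index_dvd_of_le ((AddSubgroup.closure_le _).2 (Set.pair_subset hv hw))

/-! ### Lattice points beyond a branch of a hyperbola -/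

section LatticeHull

lemma add_smul_mem_convexHull {E : Type*} [AddCommGroup E] [Module ℝ E] {A : Set E} {d : E}
    (hA : ∀ z ∈ A, z + d ∈ A) {z : E} (hz : z ∈ convexHull ℝ A) {t : ℝ} (ht : 0 ≤ t) :
    z + t • d ∈ convexHull ℝ A := by
  have hadd : ∀ y ∈ convexHull ℝ A, y + d ∈ convexHull ℝ A := fun y hy =>
    convexHull_min (t := (· + d) ⁻¹' convexHull ℝ A) (fun y hy => subset_convexHull ℝ A (hA y hy))
      ((convex_convexHull ℝ A).translate_preimage_left d) hy
  have hnat : ∀ k : ℕ, z + (k : ℝ) • d ∈ convexHull ℝ A := by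
    intro k
    induction k with
    | zero => simpa only [Nat.cast_zero, zero_smul, add_zero] using hz
    | succ k ih => simpa only [Nat.cast_succ, add_smul, one_smul, add_assoc] using hadd _ ih
  have hfract : t - ⌊t⌋₊ ∈ Set.Icc (0 : ℝ) 1 :=
    ⟨sub_nonneg.2 (Nat.floor_le ht), by linarith [Nat.lt_floor_add_one t]⟩
  have hmem := (convex_convexHull ℝ A).add_smul_mem (hnat ⌊t⌋₊) (hadd _ (hnat ⌊t⌋₊)) hfract
  rwa [add_assoc, ← add_smul, add_sub_cancel] at hmem

/-- The points on or above the branch of the hyperbola `x y = N` in the open right half-plane. -/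
def hyperbolaRegion (N : ℝ) : Set (ℝ × ℝ) := {z | 0 < z.1 ∧ N ≤ z.1 * z.2}

/-- The translate by the real vector `o` of the sublattice `Λ` of `ℤ²`. -/
def latticeTranslate (Λ : AddSubgroup (ℤ × ℤ)) (o : ℝ × ℝ) : Set (ℝ × ℝ) :=
  {z | ∃ k ∈ Λ, z = o + ((k.1 : ℝ), (k.2 : ℝ))}

/-- The convex hull of the points of a translated lattice on or above a branch of a hyperbola: the
normal form of `conv(H ∩ ℤ²)` in asymptotic coordinates. -/
def latticeHull (Λ : AddSubgroup (ℤ × ℤ)) (o : ℝ × ℝ) (N : ℝ) : Set (ℝ × ℝ) :=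
  convexHull ℝ (hyperbolaRegion N ∩ latticeTranslate Λ o)

variable {Λ : AddSubgroup (ℤ × ℤ)} {o z w : ℝ × ℝ} {N : ℝ}

lemma snd_pos_of_mem_hyperbolaRegion (hN : 0 < N) (hz : z ∈ hyperbolaRegion N) : 0 < z.2 :=
  pos_of_mul_pos_right (hN.trans_le hz.2) hz.1.le

lemma isUpperSet_hyperbolaRegion (hN : 0 < N) : IsUpperSet (hyperbolaRegion N) := by
  rintro z w ⟨hfst, hsnd⟩ hz
  have hz₂ := snd_pos_of_mem_hyperbolaRegion hN hz
  exact ⟨hz.1.trans_le hfst, hz.2.trans (mul_le_mul hfst hsnd hz₂.le (hz.1.trans_le hfst).le)⟩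

lemma add_mem_latticeTranslate (hz : z ∈ latticeTranslate Λ o) {k : ℤ × ℤ} (hk : k ∈ Λ) :
    z + ((k.1 : ℝ), (k.2 : ℝ)) ∈ latticeTranslate Λ o := by
  obtain ⟨l, hl, rfl⟩ := hz
  refine ⟨l + k, add_mem hl hk, ?_⟩
  ext <;> simp [add_assoc]

lemma exists_int_sub_fst (hz : z ∈ latticeTranslate Λ o) (hw : w ∈ latticeTranslate Λ o) :
    ∃ k : ℤ, z.1 - w.1 = k := by
  obtain ⟨k, -, rfl⟩ := hz
  obtain ⟨l, -, rfl⟩ := hw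
  exact ⟨k.1 - l.1, by simp⟩

lemma index_le_cross_sub {u v : ℝ × ℝ} (hu : u ∈ latticeTranslate Λ o)
    (hv : v ∈ latticeTranslate Λ o) (hw : w ∈ latticeTranslate Λ o)
    (hz : z ∈ latticeTranslate Λ o) (hpos : 0 < cross (v - u) (z - w)) :
    (Λ.index : ℝ) ≤ cross (v - u) (z - w) := by
  obtain ⟨u, hu, rfl⟩ := hu
  obtain ⟨v, hv, rfl⟩ := hv
  obtain ⟨w, hw, rfl⟩ := hw
  obtain ⟨z, hz, rfl⟩ := hz
  rw [add_sub_add_left_eq_sub, add_sub_add_left_eq_sub] at hpos ⊢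
  have hcast : cross (((v.1 : ℝ), (v.2 : ℝ)) - ((u.1 : ℝ), (u.2 : ℝ)))
      (((z.1 : ℝ), (z.2 : ℝ)) - ((w.1 : ℝ), (w.2 : ℝ))) = ((cross (v - u) (z - w) : ℤ) : ℝ) := by
    simp [cross]
  rw [hcast] at hpos ⊢
  exact_mod_cast Int.le_of_dvd (Int.cast_pos.1 hpos)
    (index_dvd_cross Λ (sub_mem hv hu) (sub_mem hz hw))

lemma add_horizontal_index_mem_latticeTranslate (hz : z ∈ latticeTranslate Λ o) :
    z + ((Λ.index : ℝ), 0) ∈ latticeTranslate Λ o := by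
  simpa using add_mem_latticeTranslate hz (Λ.nsmul_index_mem (1, 0))

lemma add_vertical_index_mem_latticeTranslate (hz : z ∈ latticeTranslate Λ o) :
    z + (0, (Λ.index : ℝ)) ∈ latticeTranslate Λ o := by
  simpa using add_mem_latticeTranslate hz (Λ.nsmul_index_mem (0, 1))

lemma sub_vertical_index_mem_latticeTranslate (hz : z ∈ latticeTranslate Λ o) :
    z - (0, (Λ.index : ℝ)) ∈ latticeTranslate Λ o := by
  simpa [sub_eq_add_neg] using add_mem_latticeTranslate hz (neg_mem (Λ.nsmul_index_mem (0, 1)))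

lemma convex_latticeHull : Convex ℝ (latticeHull Λ o N) := convex_convexHull ℝ _

lemma isUpperSet_latticeHull (hN : 0 < N) (hΛ : Λ.index ≠ 0) :
    IsUpperSet (latticeHull Λ o N) := by
  intro z w hzw hz
  have hD : (0 : ℝ) < Λ.index := Nat.cast_pos.2 hΛ.bot_lt
  have hup : ∀ d : ℝ × ℝ, 0 ≤ d → (∀ y ∈ latticeTranslate Λ o, y + d ∈ latticeTranslate Λ o) →
      ∀ y ∈ latticeHull Λ o N, ∀ t : ℝ, 0 ≤ t → y + t • d ∈ latticeHull Λ o N :=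
    fun d hd hadd y hy t ht =>
      add_smul_mem_convexHull (A := hyperbolaRegion N ∩ latticeTranslate Λ o) (fun p hp =>
        ⟨isUpperSet_hyperbolaRegion hN (le_add_of_nonneg_right hd) hp.1, hadd p hp.2⟩) hy ht
  have hw := hup (0, Λ.index) ⟨le_rfl, hD.le⟩ (fun _ => add_vertical_index_mem_latticeTranslate) _
    (hup (Λ.index, 0) ⟨hD.le, le_rfl⟩ (fun _ => add_horizontal_index_mem_latticeTranslate) z hz _
      (div_nonneg (sub_nonneg.2 hzw.1) hD.le)) _ (div_nonneg (sub_nonneg.2 hzw.2) hD.le)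
  convert hw using 1
  ext <;> simp [div_mul_cancel₀ _ hD.ne']

lemma mem_of_mem_extremePoints_latticeHull (hz : z ∈ (latticeHull Λ o N).extremePoints ℝ) :
    z ∈ hyperbolaRegion N ∩ latticeTranslate Λ o :=
  extremePoints_convexHull_subset hz

lemma mul_lt_add_of_mem_extremePoints_latticeHull (hN : 0 < N) (hΛ : Λ.index ≠ 0)
    (hz : z ∈ (latticeHull Λ o N).extremePoints ℝ) : z.1 * z.2 < N + Λ.index * z.1 := by
  by_contra! hge
  have hD : (0 : ℝ) < Λ.index := Nat.cast_pos.2 hΛ.bot_lt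
  obtain ⟨hreg, hlat⟩ := mem_of_mem_extremePoints_latticeHull hz
  have hadd : z + (0, (Λ.index : ℝ)) ∈ latticeHull Λ o N :=
    isUpperSet_latticeHull hN hΛ (le_add_of_nonneg_right ⟨le_rfl, hD.le⟩) (extremePoints_subset hz)
  have hsub : z - (0, (Λ.index : ℝ)) ∈ latticeHull Λ o N := by
    refine subset_convexHull ℝ _ ⟨⟨?_, ?_⟩, sub_vertical_index_mem_latticeTranslate hlat⟩ <;>
      simp only [Prod.fst_sub, Prod.snd_sub, sub_zero]
    · exact hreg.1
    · linarith
  exact hD.ne' (congrArg Prod.snd (eq_zero_of_add_mem_of_sub_mem hz hadd hsub))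

lemma image_swap_hyperbolaRegion (hN : 0 < N) :
    Prod.swap '' hyperbolaRegion N = hyperbolaRegion N := by
  rw [Set.image_swap_eq_preimage_swap]
  ext z
  simp only [hyperbolaRegion, Set.mem_preimage, Set.mem_ofPred_eq, Prod.fst_swap, Prod.snd_swap,
    mul_comm z.2]
  refine and_congr_left fun hz => ?_
  exact (pos_iff_pos_of_mul_pos (hN.trans_le hz)).symm

lemma exists_image_swap_latticeTranslate (Λ : AddSubgroup (ℤ × ℤ)) (o : ℝ × ℝ) :
    ∃ Λ' : AddSubgroup (ℤ × ℤ), Λ'.index = Λ.index ∧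
      Prod.swap '' latticeTranslate Λ o = latticeTranslate Λ' o.swap := by
  refine ⟨Λ.map ((AddEquiv.prodComm : ℤ × ℤ ≃+ ℤ × ℤ) : ℤ × ℤ →+ ℤ × ℤ),
    Λ.index_map_equiv _, ?_⟩
  ext z
  constructor
  · rintro ⟨-, ⟨k, hk, rfl⟩, rfl⟩
    exact ⟨k.swap, ⟨k, hk, rfl⟩, rfl⟩
  · rintro ⟨-, ⟨k, hk, rfl⟩, rfl⟩
    exact ⟨_, ⟨k, hk, rfl⟩, rfl⟩

lemma exists_image_swap_extremePoints_latticeHull (hN : 0 < N) :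
    ∃ Λ' : AddSubgroup (ℤ × ℤ), Λ'.index = Λ.index ∧
      Prod.swap '' (latticeHull Λ o N).extremePoints ℝ
        = (latticeHull Λ' o.swap N).extremePoints ℝ := by
  obtain ⟨Λ', hindex, himage⟩ := exists_image_swap_latticeTranslate Λ o
  refine ⟨Λ', hindex, ?_⟩
  rw [latticeHull, latticeHull, ← himage, ← image_swap_hyperbolaRegion hN,
    ← Set.image_inter Prod.swap_injective, image_swap_hyperbolaRegion hN]
  exact image_extremePoints_convexHull (LinearEquiv.prodComm ℝ ℝ ℝ).toAffineEquiv _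

lemma card_le_one_of_fst_lt_one (hN : 0 < N) (hΛ : Λ.index ≠ 0) {F : Finset (ℝ × ℝ)}
    (hF : (F : Set (ℝ × ℝ)) ⊆ (latticeHull Λ o N).extremePoints ℝ) (hlt : ∀ v ∈ F, v.1 < 1) :
    F.card ≤ 1 := by
  refine Finset.card_le_one.2 fun v hv w hw => ?_
  obtain ⟨hvreg, hvlat⟩ := mem_of_mem_extremePoints_latticeHull (hF hv)
  obtain ⟨hwreg, hwlat⟩ := mem_of_mem_extremePoints_latticeHull (hF hw)
  refine injOn_fst_extremePoints (isUpperSet_latticeHull hN hΛ) (hF hv) (hF hw) ?_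
  obtain ⟨k, hk⟩ := exists_int_sub_fst hvlat hwlat
  have habs : |(k : ℝ)| < 1 := by
    rw [← hk, abs_sub_lt_iff]
    constructor <;> linarith [hlt v hv, hlt w hw, hvreg.1, hwreg.1]
  have hk0 : k = 0 := Int.abs_lt_one_iff.1 (by exact_mod_cast habs)
  rwa [hk0, Int.cast_zero, sub_eq_zero] at hk

lemma card_le_of_fst_mem_Ico (hN : 0 < N) (hΛ : Λ.index ≠ 0) {F : Finset (ℝ × ℝ)}
    (hF : (F : Set (ℝ × ℝ)) ⊆ (latticeHull Λ o N).extremePoints ℝ) {μ σ : ℝ} (hμ : 0 < μ)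
    (hNμ : N ≤ μ ^ 3 * Λ.index) (hσ : 0 < σ) (hσμ : σ ≤ μ ^ 3)
    (hfst : ∀ v ∈ F, v.1 ∈ Set.Ico σ (2 * σ)) : (F.card : ℝ) ≤ 2 + 7 / 2 * μ := by
  set D : ℝ := (Λ.index : ℝ)
  have hD : 0 < D := Nat.cast_pos.2 hΛ.bot_lt
  have hmem : ∀ v ∈ F, v ∈ hyperbolaRegion N ∩ latticeTranslate Λ o := fun v hv =>
    mem_of_mem_extremePoints_latticeHull (hF hv)
  have hbox : ∀ v ∈ F, v.1 ∈ Set.Icc σ (σ + σ) ∧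
      v.2 ∈ Set.Icc (N / (2 * σ)) (N / (2 * σ) + (D + N / (2 * σ))) := fun v hv => by
    obtain ⟨hlo, hhi⟩ := hfst v hv
    have hv₁ : 0 < v.1 := (hmem v hv).1.1
    refine ⟨⟨hlo, by linarith⟩, ?_, ?_⟩
    · calc N / (2 * σ) ≤ N / v.1 := by gcongr
        _ ≤ v.2 := (div_le_iff₀' hv₁).2 (hmem v hv).1.2
    · have hlt := mul_lt_add_of_mem_extremePoints_latticeHull hN hΛ (hF hv)
      calc v.2 ≤ (N + D * v.1) / v.1 := (le_div_iff₀' hv₁).2 hlt.le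
        _ = N / v.1 + D := by rw [add_div, mul_div_cancel_right₀ _ hv₁.ne']
        _ ≤ N / σ + D := by gcongr
        _ = N / (2 * σ) + (D + N / (2 * σ)) := by
          field_simp
          ring
  have hcard := card_le_of_subset_extremePoints convex_latticeHull (isUpperSet_latticeHull hN hΛ)
    hF hσ (by positivity) hD hμ hbox fun u hu v hv w hw z hz =>
      index_le_cross_sub (hmem u hu).2 (hmem v hv).2 (hmem w hw).2 (hmem z hz).2
  have harea : σ * (D + N / (2 * σ)) / (D * μ ^ 2) ≤ 3 / 2 * μ := by
    rw [div_le_iff₀ (by positivity)]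
    calc σ * (D + N / (2 * σ)) = σ * D + N / 2 := by field_simp
      _ ≤ μ ^ 3 * D + μ ^ 3 * D / 2 := by gcongr
      _ = 3 / 2 * μ * (D * μ ^ 2) := by ring
  linarith

end LatticeHull

/-! ### Counting the vertices -/

lemma card_le_of_forall_dyadic {ι : Type*} {F : Finset ι} {f : ι → ℝ} {m B : ℝ} (hm : 1 ≤ m)
    (hf : ∀ i ∈ F, f i ∈ Set.Icc 1 m)
    (hB : ∀ σ ∈ Set.Icc 1 m, ∀ G ⊆ F, (∀ i ∈ G, f i ∈ Set.Ico σ (2 * σ)) → (G.card : ℝ) ≤ B) :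
    (F.card : ℝ) ≤ (Real.logb 2 m + 1) * B := by
  have hB₀ : 0 ≤ B := by simpa using hB 1 ⟨le_rfl, hm⟩ ∅ (Finset.empty_subset _) (by simp)
  have hmaps : ∀ i ∈ F, ⌊Real.logb 2 (f i)⌋₊ ∈ Finset.range (⌊Real.logb 2 m⌋₊ + 1) := fun i hi => by
    obtain ⟨hlo, hhi⟩ := hf i hi
    exact Finset.mem_range_succ_iff.2 (Nat.floor_mono
      (Real.logb_le_logb_of_le one_lt_two (by linarith) hhi))
  have hfiber : ∀ k ∈ Finset.range (⌊Real.logb 2 m⌋₊ + 1),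
      ((F.filter fun i => ⌊Real.logb 2 (f i)⌋₊ = k).card : ℝ) ≤ B := fun k hk => by
    have hkm : (2 : ℝ) ^ k ≤ m := by
      rw [← Real.rpow_natCast, ← Real.le_logb_iff_rpow_le one_lt_two (by linarith)]
      exact (Nat.le_floor_iff (Real.logb_nonneg one_lt_two hm)).1 (Finset.mem_range_succ_iff.1 hk)
    refine hB (2 ^ k) ⟨one_le_pow₀ one_le_two, hkm⟩ _ (Finset.filter_subset _ _) fun i hi => ?_
    obtain ⟨hi, hik⟩ := Finset.mem_filter.1 hi
    have hfi : 1 ≤ f i := (hf i hi).1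
    obtain ⟨hlo, hhi⟩ := (Nat.floor_eq_iff (Real.logb_nonneg one_lt_two hfi)).1 hik
    rw [Real.le_logb_iff_rpow_le one_lt_two (by linarith), Real.rpow_natCast] at hlo
    rw [Real.logb_lt_iff_lt_rpow one_lt_two (by linarith), ← Nat.cast_succ, Real.rpow_natCast,
      pow_succ'] at hhi
    exact ⟨hlo, hhi⟩
  calc (F.card : ℝ)
      = ∑ k ∈ Finset.range (⌊Real.logb 2 m⌋₊ + 1),
          ((F.filter fun i => ⌊Real.logb 2 (f i)⌋₊ = k).card : ℝ) := by
        exact_mod_cast Finset.card_eq_sum_card_fiberwise hmaps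
    _ ≤ (⌊Real.logb 2 m⌋₊ + 1 : ℕ) • B := by
        simpa only [Finset.card_range] using Finset.sum_le_card_nsmul _ _ _ hfiber
    _ ≤ (Real.logb 2 m + 1) * B := by
        rw [nsmul_eq_mul, Nat.cast_succ]
        gcongr
        exact Nat.floor_le (Real.logb_nonneg one_lt_two hm)

lemma finite_and_ncard_le_of_forall_finset {α : Type*} {s : Set α} {B : ℝ}
    (h : ∀ F : Finset α, (F : Set α) ⊆ s → (F.card : ℝ) ≤ B) : s.Finite ∧ (s.ncard : ℝ) ≤ B := by
  have hfin : s.Finite := by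
    by_contra hinf
    obtain ⟨k, hk⟩ := exists_nat_gt B
    obtain ⟨F, hFs, hFk⟩ := Set.Infinite.exists_subset_card_eq hinf k
    exact (h F hFs).not_gt (hFk ▸ hk)
  refine ⟨hfin, ?_⟩
  rw [Set.ncard_eq_toFinset_card s hfin]
  exact h _ hfin.coe_toFinset.subset

section VertexCount

variable {Λ : AddSubgroup (ℤ × ℤ)} {o : ℝ × ℝ} {N : ℝ}

lemma fst_lt_of_fst_le_snd (hN : 0 < N) (hΛ : Λ.index ≠ 0) {v : ℝ × ℝ}
    (hv : v ∈ (latticeHull Λ o N).extremePoints ℝ) (hle : v.1 ≤ v.2) {m : ℝ}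
    (hΛm : 2 * (Λ.index : ℝ) ≤ m) (hNm : N ≤ m * Λ.index) : v.1 < m := by
  by_contra! hge
  have hv₁ : 0 < v.1 := (mem_of_mem_extremePoints_latticeHull hv).1.1
  have hlt : v.1 * v.1 < m * v.1 :=
    calc v.1 * v.1 ≤ v.1 * v.2 := by gcongr
      _ < N + Λ.index * v.1 := mul_lt_add_of_mem_extremePoints_latticeHull hN hΛ hv
      _ ≤ m * Λ.index + Λ.index * v.1 := by gcongr
      _ ≤ v.1 * Λ.index + Λ.index * v.1 := by gcongr
      _ = 2 * Λ.index * v.1 := by ring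
      _ ≤ m * v.1 := by gcongr
  exact hge.not_gt (lt_of_mul_lt_mul_right hlt hv₁.le)

lemma card_le_of_fst_le_snd (hN : 0 < N) (hΛ : Λ.index ≠ 0) {F : Finset (ℝ × ℝ)}
    (hF : (F : Set (ℝ × ℝ)) ⊆ (latticeHull Λ o N).extremePoints ℝ) {μ : ℝ} (hμ : 0 < μ)
    (hΛμ : 2 * (Λ.index : ℝ) ≤ μ ^ 3) (hNμ : N ≤ μ ^ 3 * Λ.index) (hle : ∀ v ∈ F, v.1 ≤ v.2) :
    (F.card : ℝ) ≤ (Real.logb 2 (μ ^ 3) + 1) * (2 + 7 / 2 * μ) + 1 := by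
  have hm : 1 ≤ μ ^ 3 := by
    have : (1 : ℝ) ≤ Λ.index := Nat.one_le_cast.2 (Nat.one_le_iff_ne_zero.2 hΛ)
    linarith
  have hsmall : ((F.filter fun v => v.1 < 1).card : ℝ) ≤ 1 := by
    exact_mod_cast card_le_one_of_fst_lt_one hN hΛ
      ((Finset.coe_subset.2 (Finset.filter_subset _ _)).trans hF)
      fun v hv => (Finset.mem_filter.1 hv).2
  have hlarge : ((F.filter fun v => ¬ v.1 < 1).card : ℝ)
      ≤ (Real.logb 2 (μ ^ 3) + 1) * (2 + 7 / 2 * μ) := by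
    refine card_le_of_forall_dyadic hm (f := Prod.fst) (fun v hv => ?_) fun σ hσ G hG hGσ => ?_
    · obtain ⟨hv, hv₁⟩ := Finset.mem_filter.1 hv
      exact ⟨not_lt.1 hv₁, (fst_lt_of_fst_le_snd hN hΛ (hF hv) (hle v hv) hΛμ hNμ).le⟩
    · exact card_le_of_fst_mem_Ico hN hΛ
        ((Finset.coe_subset.2 (hG.trans (Finset.filter_subset _ _))).trans hF) hμ hNμ
        (zero_lt_one.trans_le hσ.1) hσ.2 hGσ
  rw [← Finset.card_filter_add_card_filter_not (s := F) fun v => v.1 < 1]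
  push_cast
  linarith

lemma card_le_of_subset_extremePoints_latticeHull (hN : 0 < N) (hΛ : Λ.index ≠ 0)
    {F : Finset (ℝ × ℝ)} (hF : (F : Set (ℝ × ℝ)) ⊆ (latticeHull Λ o N).extremePoints ℝ)
    {μ : ℝ} (hμ : 0 < μ) (hΛμ : 2 * (Λ.index : ℝ) ≤ μ ^ 3) (hNμ : N ≤ μ ^ 3 * Λ.index) :
    (F.card : ℝ) ≤ 2 * ((Real.logb 2 (μ ^ 3) + 1) * (2 + 7 / 2 * μ) + 1) := by
  have hle := card_le_of_fst_le_snd hN hΛ (F := F.filter fun v => v.1 ≤ v.2)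
    ((Finset.coe_subset.2 (Finset.filter_subset _ _)).trans hF) hμ hΛμ hNμ
    fun v hv => (Finset.mem_filter.1 hv).2
  obtain ⟨Λ', hindex, himage⟩ := exists_image_swap_extremePoints_latticeHull (Λ := Λ) (o := o) hN
  have hgt := card_le_of_fst_le_snd hN (hindex ▸ hΛ) (o := o.swap)
    (F := (F.filter fun v => ¬ v.1 ≤ v.2).image Prod.swap) (by
      rw [Finset.coe_image, ← himage]
      exact Set.image_mono ((Finset.coe_subset.2 (Finset.filter_subset _ _)).trans hF))
    hμ (hindex ▸ hΛμ) (hindex ▸ hNμ) (by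
      simp only [Finset.forall_mem_image, Prod.fst_swap, Prod.snd_swap]
      exact fun v hv => (not_le.1 (Finset.mem_filter.1 hv).2).le)
  rw [Finset.card_image_of_injective _ Prod.swap_injective] at hgt
  rw [← Finset.card_filter_add_card_filter_not (s := F) fun v => v.1 ≤ v.2]
  push_cast
  linarith

end VertexCount

/-! ### Convex components of the complement of a hyperbola -/

section Component

variable {N : ℝ} {x : ℝ × ℝ}

lemma isPreconnected_setOf_mul_lt (hN : 0 < N) : IsPreconnected {z : ℝ × ℝ | z.1 * z.2 < N} := by
  have hstar : StarConvex ℝ 0 {z : ℝ × ℝ | z.1 * z.2 < N} := by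
    refine starConvex_zero_iff.2 fun z hz t ht₀ ht₁ => ?_
    simp only [Set.mem_ofPred_eq, Prod.smul_fst, Prod.smul_snd, smul_eq_mul] at hz ⊢
    have ht : t * t ∈ Set.Icc 0 1 := ⟨mul_self_nonneg t, mul_le_one₀ ht₁ ht₀ ht₁⟩
    rw [mul_mul_mul_comm]
    rcases le_or_gt (z.1 * z.2) 0 with h | h
    · exact (mul_nonpos_of_nonneg_of_nonpos ht.1 h).trans_lt hN
    · exact (mul_le_of_le_one_left h.le ht.2).trans_lt hz
  exact (hstar.isPathConnected (by simpa using hN)).isConnected.isPreconnected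

/-- The component between the two branches is not convex: it contains the points `(2√N, 0)` and
`(0, 2√N)` of the asymptotes but not their midpoint. -/
lemma lt_mul_of_convex_connectedComponentIn (hN : 0 < N) (hx : x.1 * x.2 ≠ N)
    (hconv : Convex ℝ (connectedComponentIn {z : ℝ × ℝ | z.1 * z.2 = N}ᶜ x)) :
    N < x.1 * x.2 := by
  by_contra! hle
  have hsub : {z : ℝ × ℝ | z.1 * z.2 < N} ⊆ connectedComponentIn {z : ℝ × ℝ | z.1 * z.2 = N}ᶜ x :=
    (isPreconnected_setOf_mul_lt hN).subset_connectedComponentIn (hle.lt_of_ne hx)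
      fun z hz => ne_of_lt hz
  have hmid : (√N, √N) ∈ connectedComponentIn {z : ℝ × ℝ | z.1 * z.2 = N}ᶜ x := by
    have := hconv (hsub (a := (2 * √N, 0)) (by simpa using hN))
      (hsub (a := (0, 2 * √N)) (by simpa using hN)) (by norm_num : (0 : ℝ) ≤ 1 / 2)
      (by norm_num : (0 : ℝ) ≤ 1 / 2) (by norm_num)
    simpa using this
  exact connectedComponentIn_subset _ _ hmid (Real.mul_self_sqrt hN.le)

lemma convex_setOf_fst_pos_and_lt_mul (hN : 0 ≤ N) :
    Convex ℝ {z : ℝ × ℝ | 0 < z.1 ∧ N < z.1 * z.2} := by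
  have hinv : ConvexOn ℝ (Set.Ioi 0) fun s : ℝ => N * s⁻¹ := by
    simpa using (convexOn_zpow (-1)).smul hN
  have hepi : {z : ℝ × ℝ | 0 < z.1 ∧ N < z.1 * z.2} = {z | z.1 ∈ Set.Ioi 0 ∧ N * z.1⁻¹ < z.2} :=
    Set.ext fun z => and_congr_right fun hz => (mul_inv_lt_iff₀' hz).symm
  exact hepi ▸ hinv.convex_strict_epigraph

lemma connectedComponentIn_compl_hyperbola (hN : 0 < N) (hx₁ : 0 < x.1) (hx : N < x.1 * x.2) :
    connectedComponentIn {z : ℝ × ℝ | z.1 * z.2 = N}ᶜ x = {z | 0 < z.1 ∧ N < z.1 * z.2} := by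
  have hopen : IsOpen {z : ℝ × ℝ | 0 < z.1 ∧ N < z.1 * z.2} :=
    (isOpen_lt continuous_const continuous_fst).and (isOpen_lt continuous_const continuous_mul)
  have hopen' : IsOpen {z : ℝ × ℝ | z.1 < 0 ∨ z.1 * z.2 < N} :=
    (isOpen_lt continuous_fst continuous_const).union (isOpen_lt continuous_mul continuous_const)
  refine Set.Subset.antisymm ?_ ((convex_setOf_fst_pos_and_lt_mul hN.le).isPreconnected
    |>.subset_connectedComponentIn ⟨hx₁, hx⟩ fun z hz => ne_of_gt hz.2)
  refine isPreconnected_connectedComponentIn.subset_left_of_subset_union hopen hopen' ?_ ?_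
    ⟨x, mem_connectedComponentIn hx.ne', hx₁, hx⟩
  · rw [Set.disjoint_left]
    rintro z ⟨hpos, hgt⟩ (hneg | hlt)
    exacts [lt_asymm hpos hneg, lt_asymm hgt hlt]
  · intro z hz
    rcases lt_or_gt_of_ne (connectedComponentIn_subset _ _ hz : z.1 * z.2 ≠ N) with hlt | hgt
    · exact Or.inr (Or.inr hlt)
    · exact (left_ne_zero_of_mul (hN.trans hgt).ne').lt_or_gt.elim (fun h => Or.inr (Or.inl h))
        fun h => Or.inl ⟨h, hgt⟩

lemma closure_setOf_fst_pos_and_lt_mul (hN : 0 < N) :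
    closure {z : ℝ × ℝ | 0 < z.1 ∧ N < z.1 * z.2} = hyperbolaRegion N := by
  apply Set.Subset.antisymm
  · have hclosed : IsClosed {z : ℝ × ℝ | 0 ≤ z.1 ∧ N ≤ z.1 * z.2} :=
      (isClosed_le continuous_const continuous_fst).inter
        (isClosed_le continuous_const continuous_mul)
    intro z hz
    obtain ⟨hz₁, hz⟩ := hclosed.closure_subset_iff.2
      (fun w hw => (⟨hw.1.le, hw.2.le⟩ : 0 ≤ w.1 ∧ N ≤ w.1 * w.2)) hz
    exact ⟨hz₁.lt_of_ne' (left_ne_zero_of_mul (hN.trans_le hz).ne'), hz⟩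
  · rintro z ⟨hz₁, hz⟩
    -- `z` is the limit of its dilations by factors greater than `1`
    have htendsto : Filter.Tendsto (fun t : ℝ => t • z) (nhdsWithin 1 (Set.Ioi 1)) (nhds z) := by
      have hcont : Continuous fun t : ℝ => t • z := by fun_prop
      simpa using (hcont.tendsto 1).mono_left nhdsWithin_le_nhds
    refine mem_closure_of_tendsto htendsto ?_
    filter_upwards [self_mem_nhdsWithin] with t (ht : 1 < t)
    refine ⟨mul_pos (zero_lt_one.trans ht) hz₁, ?_⟩
    calc N ≤ z.1 * z.2 := hz
      _ < t * t * (z.1 * z.2) :=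
        lt_mul_of_one_lt_left (hN.trans_le hz) (one_lt_mul_of_lt_of_le ht ht.le)
      _ = (t • z).1 * (t • z).2 := by
        rw [Prod.smul_fst, Prod.smul_snd, smul_eq_mul, smul_eq_mul, mul_mul_mul_comm]

lemma closure_connectedComponentIn_compl_hyperbola (hN : 0 < N) (hx : x.1 * x.2 ≠ N)
    (hx₁ : 0 ≤ x.1) (hconv : Convex ℝ (connectedComponentIn {z : ℝ × ℝ | z.1 * z.2 = N}ᶜ x)) :
    closure (connectedComponentIn {z : ℝ × ℝ | z.1 * z.2 = N}ᶜ x) = hyperbolaRegion N := by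
  have hlt := lt_mul_of_convex_connectedComponentIn hN hx hconv
  have hpos : 0 < x.1 := hx₁.lt_of_ne' (left_ne_zero_of_mul (hN.trans hlt).ne')
  rw [connectedComponentIn_compl_hyperbola hN hpos hlt, closure_setOf_fst_pos_and_lt_mul hN]

end Component

/-! ### Asymptotic coordinates -/

lemma exists_factors_of_mul_eq_mul {R : Type*} [CommRing R] [IsDomain R] [DecompositionMonoid R]
    {a c β γ : R} (h : β * γ = a * c) :
    ∃ p q r s : R, a = p * r ∧ β = q * r ∧ γ = p * s ∧ c = q * s := by
  rcases eq_or_ne a 0 with rfl | ha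
  · rcases mul_eq_zero.1 (h.trans (zero_mul c)) with rfl | rfl
    · exact ⟨γ, c, 0, 1, by simp⟩
    · exact ⟨0, 1, β, c, by simp⟩
  obtain ⟨r, p, ⟨q, rfl⟩, ⟨s, rfl⟩, rfl⟩ := exists_dvd_and_dvd_of_dvd_mul (Dvd.intro c h.symm)
  refine ⟨p, q, r, s, mul_comm r p, mul_comm r q, rfl, mul_left_cancel₀ ha ?_⟩
  linear_combination -h

lemma exists_int_factorization {a b c Δ : ℤ} (h : b ^ 2 - 4 * a * c = Δ ^ 2) :
    ∃ p q r s : ℤ, p * s - q * r = Δ ∧ a = p * r ∧ b = p * s + q * r ∧ c = q * s := by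
  have heven : Even ((b - Δ) * (b + Δ)) := ⟨2 * a * c, by linear_combination h⟩
  have hparity : Even (b - Δ) := by
    rcases Int.even_mul.1 heven with hsub | hadd
    · exact hsub
    · exact Int.even_sub.2 (Int.even_add.1 hadd)
  obtain ⟨β, hβ⟩ := hparity
  have hmul : β * (b - β) = a * c :=
    mul_left_cancel₀ four_ne_zero (by linear_combination h - (b - 2 * β + Δ) * hβ)
  obtain ⟨p, q, r, s, ha, hqr, hps, hc⟩ := exists_factors_of_mul_eq_mul hmul
  exact ⟨p, q, r, s, by linarith, ha, by linarith, hc⟩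

lemma exists_int_linear_factors {a b c Δ : ℤ} (h : b ^ 2 - 4 * a * c = Δ ^ 2) (n : ℝ) :
    ∃ p q r s : ℤ, p * s - q * r = Δ ∧ ∀ X Y : ℝ,
      a * X ^ 2 + b * X * Y + c * Y ^ 2 = n ↔ (p * X + q * Y) * (r * X + s * Y) = |n| := by
  obtain ⟨p, q, r, s, hdet, rfl, rfl, rfl⟩ := exists_int_factorization h
  rcases le_total 0 n with hn | hn
  · refine ⟨p, q, r, s, hdet, fun X Y => ?_⟩
    rw [abs_of_nonneg hn]
    push_cast
    constructor <;> intro hXY <;> linear_combination hXY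
  -- negating one factor would negate the determinant, so the factors are also exchanged
  · refine ⟨-r, -s, p, q, by linear_combination hdet, fun X Y => ?_⟩
    rw [abs_of_nonpos hn]
    push_cast
    constructor <;> intro hXY <;> linear_combination -hXY

lemma exists_int_linear_factors_nonneg {a b c Δ : ℤ} (h : b ^ 2 - 4 * a * c = Δ ^ 2) (n : ℝ)
    (v : ℝ × ℝ) : ∃ p q r s : ℤ, p * s - q * r = Δ ∧ 0 ≤ p * v.1 + q * v.2 ∧ ∀ X Y : ℝ,
      a * X ^ 2 + b * X * Y + c * Y ^ 2 = n ↔ (p * X + q * Y) * (r * X + s * Y) = |n| := by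
  obtain ⟨p, q, r, s, hdet, hform⟩ := exists_int_linear_factors h n
  rcases le_total 0 (p * v.1 + q * v.2) with hv | hv
  · exact ⟨p, q, r, s, hdet, hv, hform⟩
  · refine ⟨-p, -q, -r, -s, by linear_combination hdet, ?_, fun X Y => ?_⟩
    · push_cast
      linarith
    · rw [hform]
      push_cast
      ring_nf

/-- The affine coordinates `(p x + q y, r x + s y)` on the plane, where `x` and `y` are measured
from the center `o`. -/
def affineCoordinates (p q r s : ℝ) (hdet : p * s - q * r ≠ 0) (o : ℝ × ℝ) :
    (ℝ × ℝ) ≃ᵃ[ℝ] (ℝ × ℝ) :=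
  (AffineEquiv.vaddConst ℝ o).symm.trans <| LinearEquiv.toAffineEquiv
    { toFun z := (p * z.1 + q * z.2, r * z.1 + s * z.2)
      invFun z := ((s * z.1 - q * z.2) / (p * s - q * r), (p * z.2 - r * z.1) / (p * s - q * r))
      map_add' z w := by
        ext <;> simp <;> ring
      map_smul' t z := by
        ext <;> simp <;> ring
      left_inv z := by
        ext <;> rw [div_eq_iff hdet] <;> ring
      right_inv z := by
        ext <;> simp only [mul_div_assoc', ← add_div] <;> rw [div_eq_iff hdet] <;> ring }

lemma affineCoordinates_apply {p q r s : ℝ} (hdet : p * s - q * r ≠ 0) (o z : ℝ × ℝ) :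
    affineCoordinates p q r s hdet o z
      = (p * (z.1 - o.1) + q * (z.2 - o.2), r * (z.1 - o.1) + s * (z.2 - o.2)) :=
  rfl

lemma image_affineCoordinates_intLattice {p q r s : ℤ} (hdet : (p * s - q * r : ℝ) ≠ 0)
    (o : ℝ × ℝ) :
    affineCoordinates p q r s hdet o '' intLattice
      = latticeTranslate (AddSubgroup.closure {(p, r), (q, s)})
        (affineCoordinates p q r s hdet o 0) := by
  have happly : ∀ i j : ℤ, affineCoordinates p q r s hdet o (i, j)
      = affineCoordinates p q r s hdet o 0
        + (((i • (p, r) + j • (q, s) : ℤ × ℤ).1 : ℝ), ((i • (p, r) + j • (q, s) : ℤ × ℤ).2 : ℝ)) :=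
      fun i j => by
    ext <;> simp [affineCoordinates_apply] <;> ring
  ext z
  constructor
  · rintro ⟨-, ⟨i, j, rfl⟩, rfl⟩
    exact ⟨_, AddSubgroup.mem_closure_pair.2 ⟨i, j, rfl⟩, happly i j⟩
  · rintro ⟨k, hk, rfl⟩
    obtain ⟨i, j, rfl⟩ := AddSubgroup.mem_closure_pair.1 hk
    exact ⟨_, ⟨i, j, rfl⟩, happly i j⟩

lemma exists_asymptotic_coordinates {a b c Δ : ℤ} (hΔ : 0 < Δ) (h : b ^ 2 - 4 * a * c = Δ ^ 2)
    (x₀ y₀ n : ℝ) (x : ℝ × ℝ) :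
    ∃ (f : (ℝ × ℝ) ≃ᵃ[ℝ] (ℝ × ℝ)) (Λ : AddSubgroup (ℤ × ℤ)), (Λ.index : ℤ) = Δ ∧
      f '' intLattice = latticeTranslate Λ (f 0) ∧
      f '' hypSet a b c x₀ y₀ n = {z | z.1 * z.2 = |n|} ∧ 0 ≤ (f x).1 := by
  obtain ⟨p, q, r, s, hdet, hx, hform⟩ :=
    exists_int_linear_factors_nonneg h n (x.1 - x₀, x.2 - y₀)
  have hdetℝ : (p * s - q * r : ℝ) ≠ 0 := by exact_mod_cast hdet ▸ hΔ.ne'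
  have hcross : cross (p, r) (q, s) = Δ := by
    rw [cross, ← hdet]
    ring
  refine ⟨affineCoordinates p q r s hdetℝ (x₀, y₀), _, ?_,
    image_affineCoordinates_intLattice hdetℝ (x₀, y₀), ?_, hx⟩
  · rw [index_closure_pair (hcross ▸ hΔ.ne'), hcross, Int.natCast_natAbs, abs_of_pos hΔ]
  · ext z
    obtain ⟨z, rfl⟩ := (affineCoordinates p q r s hdetℝ (x₀, y₀)).surjective z
    rw [(affineCoordinates p q r s hdetℝ (x₀, y₀)).injective.mem_set_image]
    exact hform _ _

lemma exists_image_extremePoints_eq_latticeHull {a b c Δ : ℤ} (hΔ : 0 < Δ)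
    (h : b ^ 2 - 4 * a * c = Δ ^ 2) {x₀ y₀ n : ℝ} (hn : n ≠ 0) {x : ℝ × ℝ}
    (hx : x ∉ hypSet a b c x₀ y₀ n)
    (hconv : Convex ℝ (connectedComponentIn (hypSet a b c x₀ y₀ n)ᶜ x)) :
    ∃ (f : (ℝ × ℝ) ≃ᵃ[ℝ] (ℝ × ℝ)) (Λ : AddSubgroup (ℤ × ℤ)), (Λ.index : ℤ) = Δ ∧
      f '' (convexHull ℝ (closure (connectedComponentIn (hypSet a b c x₀ y₀ n)ᶜ x) ∩
        intLattice)).extremePoints ℝ = (latticeHull Λ (f 0) |n|).extremePoints ℝ := by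
  obtain ⟨f, Λ, hindex, hlattice, hhyp, hfx⟩ := exists_asymptotic_coordinates hΔ h x₀ y₀ n x
  have hcomponent : f '' connectedComponentIn (hypSet a b c x₀ y₀ n)ᶜ x
      = connectedComponentIn {z : ℝ × ℝ | z.1 * z.2 = |n|}ᶜ (f x) := by
    rw [← hhyp, ← Set.image_compl_eq f.bijective]
    exact f.toContinuousAffineEquiv.toHomeomorph.image_connectedComponentIn hx
  have hclosure : ∀ s, f '' closure s = closure (f '' s) :=
    f.toContinuousAffineEquiv.toHomeomorph.image_closure
  have hfx_ne : (f x).1 * (f x).2 ≠ |n| := fun hmem => by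
    have : f x ∈ f '' hypSet a b c x₀ y₀ n := hhyp ▸ hmem
    exact hx (f.injective.mem_set_image.1 this)
  refine ⟨f, Λ, hindex, ?_⟩
  rw [image_extremePoints_convexHull, Set.image_inter f.injective, hlattice,
    hclosure, hcomponent, closure_connectedComponentIn_compl_hyperbola
      (abs_pos.2 hn) hfx_ne hfx (hcomponent ▸ hconv.affine_image f.toAffineMap), latticeHull]

/-! ### The bound -/

lemma dyadic_vertex_bound_le {m : ℝ} (hm : 2 ≤ m) :
    2 * ((Real.logb 2 m + 1) * (2 + 7 / 2 * m ^ ((1 : ℝ) / 3)) + 1) ≤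
      2 ^ ((7 : ℝ) / 3) * Real.pi ^ ((2 : ℝ) / 3) * m ^ ((1 : ℝ) / 3) * (Real.logb 2 m + 2) := by
  have le_rpow_div_three : ∀ {u t : ℝ} (e : ℝ), 0 ≤ t → u ^ 3 ≤ t ^ e → u ≤ t ^ (e / 3) :=
    fun {u t} e ht h => le_of_pow_le_pow_left₀ three_ne_zero (by positivity) <| h.trans_eq <| by
      rw [← Real.rpow_mul_natCast ht, Nat.cast_ofNat, div_mul_cancel₀ e three_ne_zero]
  have htwo : (5 : ℝ) ≤ 2 ^ ((7 : ℝ) / 3) := le_rpow_div_three 7 zero_le_two (by norm_num)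
  have hpi : (2.04 : ℝ) ≤ Real.pi ^ ((2 : ℝ) / 3) :=
    le_rpow_div_three 2 Real.pi_pos.le <| by
      rw [Real.rpow_two]
      nlinarith [Real.pi_gt_three]
  have hm' : (1.25 : ℝ) ≤ m ^ ((1 : ℝ) / 3) :=
    le_rpow_div_three 1 (by positivity) <| by
      rw [Real.rpow_one]
      linarith
  have hlog : 0 ≤ Real.logb 2 m := Real.logb_nonneg one_lt_two (by linarith)
  calc 2 * ((Real.logb 2 m + 1) * (2 + 7 / 2 * m ^ ((1 : ℝ) / 3)) + 1)
      ≤ 5 * 2.04 * m ^ ((1 : ℝ) / 3) * (Real.logb 2 m + 2) := by nlinarith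
    _ ≤ _ := by gcongr

lemma finite_and_ncard_extremePoints_latticeHull_le {Λ : AddSubgroup (ℤ × ℤ)} {o : ℝ × ℝ}
    {N m : ℝ} (hN : 0 < N) (hΛ : Λ.index ≠ 0) (hΛm : 2 * (Λ.index : ℝ) ≤ m)
    (hNm : N ≤ m * Λ.index) :
    ((latticeHull Λ o N).extremePoints ℝ).Finite ∧
      (((latticeHull Λ o N).extremePoints ℝ).ncard : ℝ) ≤
        2 ^ ((7 : ℝ) / 3) * Real.pi ^ ((2 : ℝ) / 3) * m ^ ((1 : ℝ) / 3) *
          (Real.logb 2 m + 2) := by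
  have hm : 2 ≤ m := by
    have : (1 : ℝ) ≤ Λ.index := Nat.one_le_cast.2 (Nat.one_le_iff_ne_zero.2 hΛ)
    linarith
  have hm₀ : 0 < m := zero_lt_two.trans_le hm
  have hcube : (m ^ ((1 : ℝ) / 3)) ^ 3 = m := by
    rw [← Real.rpow_mul_natCast hm₀.le, Nat.cast_ofNat, div_mul_cancel₀ 1 three_ne_zero,
      Real.rpow_one]
  refine finite_and_ncard_le_of_forall_finset fun F hF => ?_
  have hcard := card_le_of_subset_extremePoints_latticeHull hN hΛ hF
    (Real.rpow_pos_of_pos hm₀ (1 / 3)) (by rwa [hcube]) (by rwa [hcube])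
  rw [hcube] at hcard
  exact hcard.trans (dyadic_vertex_bound_le hm)

/-- Upper bound `C m^(1/3) (log₂ m + 2)`, with `C = 2^(7/3) π^(2/3)` and
`m = max {2Δ, |n|/Δ}`, on the number of vertices of the convex hull of the integer
points in the closure `H` of a convex connected component of the complement of a
hyperbola with integer coefficients and positive integer discriminant `Δ`. -/
theorem statement3 (a b c Δ : ℤ) (hΔ : 0 < Δ)
    (hdisc : (Δ : ℝ) = Real.sqrt ((b : ℝ) ^ 2 - 4 * (a : ℝ) * (c : ℝ)))
    (x₀ y₀ n : ℝ) (hn : n ≠ 0)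
    (x : ℝ × ℝ) (hx : x ∉ hypSet a b c x₀ y₀ n)
    (K : Set (ℝ × ℝ)) (hK : K = connectedComponentIn (hypSet a b c x₀ y₀ n)ᶜ x)
    (hKconv : Convex ℝ K)
    (H : Set (ℝ × ℝ)) (hH : H = closure K)
    (m : ℝ) (hm : m = max (2 * (Δ : ℝ)) (|n| / (Δ : ℝ))) :
    (Set.extremePoints ℝ (convexHull ℝ (H ∩ intLattice))).Finite ∧
    ((Set.extremePoints ℝ (convexHull ℝ (H ∩ intLattice))).ncard : ℝ) ≤
      2 ^ ((7 : ℝ) / 3) * Real.pi ^ ((2 : ℝ) / 3) * m ^ ((1 : ℝ) / 3) *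
        (Real.logb 2 m + 2) := by
  subst hK hH
  have hΔℝ : (0 : ℝ) < Δ := Int.cast_pos.2 hΔ
  have hsq : b ^ 2 - 4 * a * c = Δ ^ 2 := by
    have : (b : ℝ) ^ 2 - 4 * a * c = Δ ^ 2 := by
      rw [hdisc, Real.sq_sqrt (Real.sqrt_pos.1 (hdisc ▸ hΔℝ)).le]
    exact_mod_cast this
  obtain ⟨f, Λ, hindex, himage⟩ := exists_image_extremePoints_eq_latticeHull hΔ hsq hn hx hKconv
  have hindexℝ : (Λ.index : ℝ) = Δ := by exact_mod_cast hindex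
  have hΛ : Λ.index ≠ 0 := fun h => hΔ.ne' (by rw [← hindex, h, Nat.cast_zero])
  have hΛm : 2 * (Λ.index : ℝ) ≤ m := by
    rw [hindexℝ, hm]
    exact le_max_left _ _
  have hnm : |n| ≤ m * Λ.index := by
    rw [hindexℝ, hm, ← div_le_iff₀ hΔℝ]
    exact le_max_right _ _
  have hbound := finite_and_ncard_extremePoints_latticeHull_le (o := f 0) (abs_pos.2 hn) hΛ hΛm hnm
  rwa [← himage, Set.finite_image_iff f.injective.injOn,
    Set.ncard_image_of_injective _ f.injective] at hbound

end
end
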